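/- arXiv:quant-ph/0512012 — 2 statements merged into one kernel-verified Lean document; each statement's English description precedes it below -/
import Mathlib

section
/- Let d ≥ 2 and 2 ≤ n ≤ d, and let ρ_g = (𝟙 − Z)/(d² − d). For every real β with (d−n)/n ≤ β < (d−n+1)/(n−1), the matrix (β ρ_g + P_+)/(1+β) has Schmidt number exactly n, i.e. it has Schmidt number at most n but does not have Schmidt number at most n−1. -/
open Matrix BigOperators Kronecker ComplexOrder

/-- The d×d matrix `M_v` associated with a vector `v` on ℂ^d ⊗ ℂ^d, `(M_v)_{ij} = v (i,j)`. -/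
def toMat (d : ℕ) (v : Fin d × Fin d → ℂ) : Matrix (Fin d) (Fin d) ℂ :=
  Matrix.of fun i j => v (i, j)

/-- `ρ` has Schmidt number at most `n`: it is a finite sum of `w wᴴ` with each `w` of
Schmidt rank (i.e. rank of the associated d×d matrix) at most `n`. -/
def SchmidtNumberLE (d : ℕ) (ρ : Matrix (Fin d × Fin d) (Fin d × Fin d) ℂ) (n : ℕ) : Prop :=
  ∃ (k : ℕ) (w : Fin k → (Fin d × Fin d → ℂ)),
    (∀ i, (toMat d (w i)).rank ≤ n) ∧
    ρ = ∑ i, Matrix.vecMulVec (w i) (star (w i))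

/-- The maximally entangled unit vector `ψ₊ = (1/√d) Σ_i |ii⟩`. -/
noncomputable def psiPlus (d : ℕ) : Fin d × Fin d → ℂ :=
  fun p => if p.1 = p.2 then (((Real.sqrt d)⁻¹ : ℝ) : ℂ) else 0

/-- `P₊ = ψ₊ ψ₊ᴴ`. -/
noncomputable def Pplus (d : ℕ) : Matrix (Fin d × Fin d) (Fin d × Fin d) ℂ :=
  Matrix.vecMulVec (psiPlus d) (star (psiPlus d))

/-- `Z = Σ_i |ii⟩⟨ii|`. -/
noncomputable def Zmat (d : ℕ) : Matrix (Fin d × Fin d) (Fin d × Fin d) ℂ :=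
  Matrix.diagonal (fun p => if p.1 = p.2 then (1 : ℂ) else 0)

/-! Permuting the basis and applying opposite diagonal phases to the two factors does not raise the
Schmidt rank. Averaging a vector with coefficient matrix `M` of constant diagonal `c` over these
symmetries leaves a combination of `ρ_g` and `P₊` that depends only on `c` and the Frobenius norm of
`M`. A rank-`n` projection diagonal in the Fourier basis has constant diagonal `n / d`, and its
average is a multiple of `ρ_β := (β ρ_g + P₊)/(1 + β)` with `β = (d - n) / n`; a larger `β` only
adds multiples of the separable `ρ_g`. Conversely `|tr M|² ≤ rank M · ‖M‖²` bounds the fidelity with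
`ψ₊` of a state of Schmidt number at most `n` by `n / d`, and the fidelity of `ρ_β` is
`1 / (1 + β)`. -/

section TraceRank

open scoped Matrix.Norms.Frobenius

variable {m n 𝕜 : Type*} [Fintype m] [Fintype n] [RCLike 𝕜]

lemma frobenius_norm_sq_eq_sum (A : Matrix m n 𝕜) : ‖A‖ ^ 2 = ∑ i, ∑ j, ‖A i j‖ ^ 2 := by
  rw [frobenius_norm_def, ← Real.sqrt_eq_rpow, Real.sq_sqrt (by positivity)]
  simp only [Real.rpow_two]

lemma trace_conjTranspose_mul_self_eq_frobenius_norm_sq (A : Matrix m n 𝕜) :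
    (Aᴴ * A).trace = ((‖A‖ ^ 2 : ℝ) : 𝕜) := by
  rw [frobenius_norm_sq_eq_sum, Finset.sum_comm]
  simp [Matrix.trace, Matrix.mul_apply, RCLike.conj_mul]

lemma norm_trace_mul_le (A : Matrix m n 𝕜) (B : Matrix n m 𝕜) :
    ‖(A * B).trace‖ ≤ ‖A‖ * ‖B‖ := by
  have sqrt_sum (C : Matrix m n 𝕜) : √(∑ p : m × n, ‖C p.1 p.2‖ ^ 2) = ‖C‖ := by
    rw [Fintype.sum_prod_type' (f := fun i j => ‖C i j‖ ^ 2), ← frobenius_norm_sq_eq_sum,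
      Real.sqrt_sq (norm_nonneg C)]
  calc ‖(A * B).trace‖
      = ‖∑ p : m × n, A p.1 p.2 * Bᵀ p.1 p.2‖ := by
        simp only [Matrix.trace, Matrix.diag, Matrix.mul_apply, Fintype.sum_prod_type,
          transpose_apply]
    _ ≤ ∑ p : m × n, ‖A p.1 p.2‖ * ‖Bᵀ p.1 p.2‖ :=
        (norm_sum_le _ _).trans_eq (by simp only [norm_mul])
    _ ≤ ‖A‖ * ‖Bᵀ‖ := by
        simpa only [sqrt_sum] using Real.sum_mul_le_sqrt_mul_sqrt Finset.univ
          (fun p : m × n => ‖A p.1 p.2‖) (fun p => ‖Bᵀ p.1 p.2‖)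
    _ = ‖A‖ * ‖B‖ := by rw [frobenius_norm_transpose]

lemma trace_eq_rank_of_isIdempotentElem {K : Type*} [Field K] {P : Matrix n n K}
    (hP : IsIdempotentElem P) : P.trace = P.rank := by
  classical
  have hlin : IsIdempotentElem P.toLin' := by
    rw [IsIdempotentElem, Module.End.mul_eq_comp, ← toLin'_mul, hP.eq]
  rw [← trace_toLin'_eq, (LinearMap.IsIdempotentElem.isProj_range _ hlin).trace, rank,
    toLin'_apply']

lemma frobenius_norm_sq_eq_rank_of_isStarProjection {P : Matrix n n 𝕜}
    (hP : IsStarProjection P) : ‖P‖ ^ 2 = P.rank := by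
  have htrace := trace_conjTranspose_mul_self_eq_frobenius_norm_sq P
  rw [← star_eq_conjTranspose, hP.isSelfAdjoint.star_eq, hP.isIdempotentElem.eq,
    trace_eq_rank_of_isIdempotentElem hP.isIdempotentElem] at htrace
  exact_mod_cast htrace.symm

lemma exists_isStarProjection_mul_eq_self (M : Matrix n n 𝕜) :
    ∃ P : Matrix n n 𝕜, IsStarProjection P ∧ P * M = M ∧ P.rank = M.rank := by
  classical
  let Φ := toEuclideanCLM (n := n) (𝕜 := 𝕜)
  let T := Φ M
  have rank_eq (A : Matrix n n 𝕜) : A.rank = Module.finrank 𝕜 (Φ A).range :=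
    A.rank_eq_finrank_range_toLin (PiLp.basisFun 2 𝕜 n) (PiLp.basisFun 2 𝕜 n)
  refine ⟨Φ.symm T.range.starProjection, isStarProjection_starProjection.map Φ.symm, ?_, ?_⟩
  · refine EquivLike.injective Φ ?_
    rw [map_mul, Φ.apply_symm_apply]
    ext1 x
    exact Submodule.starProjection_eq_self_iff.mpr ⟨x, rfl⟩
  · rw [rank_eq, rank_eq, Φ.apply_symm_apply, Submodule.range_starProjection]

lemma norm_trace_sq_le_rank_mul (M : Matrix n n 𝕜) :
    ‖M.trace‖ ^ 2 ≤ M.rank * ‖M‖ ^ 2 := by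
  obtain ⟨P, hP, hPM, hrank⟩ := exists_isStarProjection_mul_eq_self M
  calc ‖M.trace‖ ^ 2 = ‖(P * M).trace‖ ^ 2 := by rw [hPM]
    _ ≤ (‖P‖ * ‖M‖) ^ 2 := by gcongr; exact norm_trace_mul_le P M
    _ = M.rank * ‖M‖ ^ 2 := by
      rw [mul_pow, frobenius_norm_sq_eq_rank_of_isStarProjection hP, hrank]

end TraceRank

section FlatProjection

lemma ofReal_inv_sqrt_mul_self {x : ℝ} (hx : 0 ≤ x) :
    (((√x)⁻¹ : ℝ) : ℂ) * ((√x)⁻¹ : ℝ) = (x : ℂ)⁻¹ := by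
  rw [← Complex.ofReal_mul, ← mul_inv, Real.mul_self_sqrt hx, Complex.ofReal_inv]

variable {ι : Type*} [Fintype ι] [Nonempty ι]

lemma exists_mem_unitaryGroup_norm_sq_eq [DecidableEq ι] :
    ∃ U ∈ unitaryGroup ι ℂ, ∀ i j, ‖U i j‖ ^ 2 = (Fintype.card ι : ℝ)⁻¹ := by
  have e : ι ≃ ZMod (Fintype.card ι) := Fintype.equivOfCardEq (ZMod.card _).symm
  have hψ := ZMod.isPrimitive_stdAddChar (Fintype.card ι)
  set ψ : AddChar (ZMod (Fintype.card ι)) ℂ := ZMod.stdAddChar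
  set d : ℝ := (Fintype.card ι : ℝ)
  have hs : (((√d)⁻¹ : ℝ) : ℂ) * ((√d)⁻¹ : ℝ) = (d : ℂ)⁻¹ :=
    ofReal_inv_sqrt_mul_self (Nat.cast_nonneg _)
  refine ⟨Matrix.of fun i j => ((√d)⁻¹ : ℝ) * ψ (e j * e i), ?_, fun i j => ?_⟩
  · rw [mem_unitaryGroup_iff]
    ext i k
    calc _ = (d : ℂ)⁻¹ * ∑ j, ψ (e j * (e i - e k)) := by
          rw [Matrix.mul_apply, Finset.mul_sum]
          refine Finset.sum_congr rfl fun j _ => ?_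
          rw [← hs, mul_sub, sub_eq_add_neg, AddChar.map_add_eq_mul, AddChar.map_neg_eq_conj]
          simp only [of_apply, star_apply, star_mul', RCLike.star_def, Complex.conj_ofReal]
          ring
      _ = (1 : Matrix ι ι ℂ) i k := by
          rw [e.sum_comp (fun x => ψ (x * (e i - e k))), AddChar.sum_mulShift _ hψ,
            Matrix.one_apply]
          by_cases hik : i = k <;> simp [hik, sub_eq_zero, d]
  · have hd : 0 ≤ d := Nat.cast_nonneg _
    simp [Real.sq_sqrt hd]

lemma exists_isStarProjection_diag_eq {r : ℕ} (hr : r ≤ Fintype.card ι) :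
    ∃ P : Matrix ι ι ℂ, IsStarProjection P ∧ ∀ i, P i i = (r / Fintype.card ι : ℝ) := by
  classical
  obtain ⟨s, -, hs⟩ := Finset.exists_subset_card_eq (s := (Finset.univ : Finset ι)) hr
  obtain ⟨U, hU, hflat⟩ := exists_mem_unitaryGroup_norm_sq_eq (ι := ι)
  let D : Matrix ι ι ℂ := diagonal fun i => if i ∈ s then 1 else 0
  have hD : IsStarProjection D := by
    constructor
    · simp [IsIdempotentElem, D, diagonal_mul_diagonal]
    · simp [IsSelfAdjoint, D, star_eq_conjTranspose, diagonal_conjTranspose, apply_ite]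
  refine ⟨U * D * star U, ?_, fun i => ?_⟩
  · exact hD.map (Unitary.conjStarAlgAut ℂ _ ⟨U, hU⟩)
  · calc (U * D * star U) i i = ∑ j, if j ∈ s then ((‖U i j‖ ^ 2 : ℝ) : ℂ) else 0 := by
          rw [Matrix.mul_apply]
          simp [D, mul_diagonal, Complex.mul_conj', ite_mul]
      _ = (r / Fintype.card ι : ℝ) := by
          simp only [hflat]
          simp [hs, div_eq_mul_inv]

end FlatProjection

section Twirl

variable {ι : Type*}

lemma exists_zmod_three_sub_ne_sub {i j k l : ι} (h₁ : ¬(i = j ∧ k = l)) (h₂ : ¬(i = k ∧ j = l)) :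
    ∃ χ : ι → ZMod 3, χ i - χ j ≠ χ k - χ l := by
  classical
  by_contra! h
  have hi := h (Pi.single i 1)
  have hj := h (Pi.single j 1)
  have hk := h (Pi.single k 1)
  simp only [Pi.single_apply] at hi hj hk
  have : (1 : ZMod 3) + 1 ≠ 0 := by decide
  grind

variable [Fintype ι] [DecidableEq ι]

lemma card_offDiag_nsmul_sum_perm {N : Type*} [AddCommMonoid N] (f : ι → ι → N) {i j : ι}
    (hij : i ≠ j) :
    (Finset.univ : Finset ι).offDiag.card • ∑ σ : Equiv.Perm ι, f (σ i) (σ j) =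
      (Fintype.card ι).factorial • ∑ p ∈ (Finset.univ : Finset ι).offDiag, f p.1 p.2 := by
  have average_const : ∀ p ∈ (Finset.univ : Finset ι).offDiag,
      ∑ σ : Equiv.Perm ι, f (σ p.1) (σ p.2) = ∑ σ : Equiv.Perm ι, f (σ i) (σ j) := by
    rintro ⟨k, l⟩ hp
    obtain ⟨τ, rfl, rfl⟩ := MulAction.is_two_pretransitive_iff.mp
      (Equiv.Perm.isMultiplyPretransitive ι 2) hij (Finset.mem_offDiag.mp hp).2.2
    exact Equiv.sum_comp (Equiv.mulRight τ) fun σ => f (σ i) (σ j)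
  have reindex (σ : Equiv.Perm ι) : ∑ p ∈ (Finset.univ : Finset ι).offDiag, f (σ p.1) (σ p.2) =
      ∑ p ∈ (Finset.univ : Finset ι).offDiag, f p.1 p.2 :=
    Finset.sum_equiv (σ.prodCongr σ) (by simp) (by simp)
  rw [← Finset.sum_const, ← Finset.sum_congr rfl average_const, Finset.sum_comm,
    Finset.sum_congr rfl fun σ _ => reindex σ, Finset.sum_const, Finset.card_univ,
    Fintype.card_perm]

lemma sum_stdAddChar_sub_sub (i j k l : ι) :
    ∑ χ : ι → ZMod 3, (ZMod.stdAddChar (χ i - χ j - (χ k - χ l)) : ℂ) =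
      if (i = j ∧ k = l) ∨ (i = k ∧ j = l) then (3 : ℂ) ^ Fintype.card ι else 0 := by
  let φ : (ι → ZMod 3) →+ ZMod 3 :=
    (Pi.evalAddMonoidHom (fun _ => ZMod 3) i - Pi.evalAddMonoidHom (fun _ => ZMod 3) j) -
      (Pi.evalAddMonoidHom (fun _ => ZMod 3) k - Pi.evalAddMonoidHom (fun _ => ZMod 3) l)
  let ψ : AddChar (ι → ZMod 3) ℂ := ZMod.stdAddChar.compAddMonoidHom φ
  change ∑ χ, ψ χ = _
  split_ifs with h
  · have hφ : φ = 0 := by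
      obtain ⟨rfl, rfl⟩ | ⟨rfl, rfl⟩ := h <;> simp [φ]
    simp [ψ, hφ]
  · obtain ⟨h₁, h₂⟩ := not_or.mp h
    obtain ⟨χ, hχ⟩ := exists_zmod_three_sub_ne_sub h₁ h₂
    refine AddChar.sum_eq_zero_iff_ne_zero.mpr (AddChar.ne_one_iff.mpr ⟨χ, fun hψ => hχ ?_⟩)
    rw [← AddChar.map_zero_eq_one (ZMod.stdAddChar (N := 3))] at hψ
    exact sub_eq_zero.mp (ZMod.injective_stdAddChar hψ)

/-- The image of the vector with coefficients `M i j` under simultaneous relabelling of both tensor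
factors by `σ` and the phases `ω ^ χ i`, `ω ^ (-χ j)` on them, where `ω = exp (2πi/3)`. Signs would
not suffice: they leave the entries `((i, j), (j, i))` of the twirl nonzero in general. -/
noncomputable def twirlVec (M : Matrix ι ι ℂ) (σ : Equiv.Perm ι) (χ : ι → ZMod 3) : ι × ι → ℂ :=
  fun p => ZMod.stdAddChar (χ p.1 - χ p.2) * M (σ p.1) (σ p.2)

/-- The unnormalised twirl of `v vᴴ`, where `v` is the vector with coefficients `M i j`: the sum of
its conjugates over all permutations and phases of `twirlVec`. -/
noncomputable def twirl (M : Matrix ι ι ℂ) : Matrix (ι × ι) (ι × ι) ℂ :=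
  ∑ x : Equiv.Perm ι × (ι → ZMod 3), vecMulVec (twirlVec M x.1 x.2) (star (twirlVec M x.1 x.2))

lemma twirl_apply (M : Matrix ι ι ℂ) (i j k l : ι) :
    twirl M (i, j) (k, l) =
      (if (i = j ∧ k = l) ∨ (i = k ∧ j = l) then (3 : ℂ) ^ Fintype.card ι else 0) *
        ∑ σ : Equiv.Perm ι, M (σ i) (σ j) * star (M (σ k) (σ l)) := by
  rw [← sum_stdAddChar_sub_sub, Finset.sum_mul_sum, Finset.sum_comm, twirl, Matrix.sum_apply,
    Fintype.sum_prod_type]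
  refine Finset.sum_congr rfl fun σ _ => Finset.sum_congr rfl fun χ _ => ?_
  rw [sub_eq_add_neg (χ i - χ j), AddChar.map_add_eq_mul, AddChar.map_neg_eq_conj]
  simp only [vecMulVec_apply, twirlVec, Pi.star_apply, star_mul', RCLike.star_def]
  ring

open scoped Matrix.Norms.Frobenius in
lemma sum_perm_norm_sq_of_diag_eq {M : Matrix ι ι ℂ} {c : ℂ} (hc : ∀ i, M i i = c) {i j : ι}
    (hij : i ≠ j) :
    ((Fintype.card ι : ℝ) ^ 2 - Fintype.card ι) * ∑ σ : Equiv.Perm ι, ‖M (σ i) (σ j)‖ ^ 2 =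
      (Fintype.card ι).factorial * (‖M‖ ^ 2 - Fintype.card ι * ‖c‖ ^ 2) := by
  have hcard : (((Finset.univ : Finset ι).offDiag.card : ℕ) : ℝ) =
      (Fintype.card ι : ℝ) ^ 2 - Fintype.card ι := by
    rw [Finset.offDiag_card, Finset.card_univ, Nat.cast_sub (Nat.le_mul_self _), Nat.cast_mul, sq]
  have hsplit : ‖M‖ ^ 2 = Fintype.card ι * ‖c‖ ^ 2 +
      ∑ p ∈ (Finset.univ : Finset ι).offDiag, ‖M p.1 p.2‖ ^ 2 := by
    rw [frobenius_norm_sq_eq_sum, ← Fintype.sum_prod_type' (f := fun i j => ‖M i j‖ ^ 2),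
      ← Finset.univ_product_univ, ← Finset.diag_union_offDiag,
      Finset.sum_union (Finset.disjoint_diag_offDiag _), Finset.sum_diag]
    simp [hc]
  have haverage := card_offDiag_nsmul_sum_perm (fun i j => ‖M i j‖ ^ 2) hij
  rw [nsmul_eq_mul, nsmul_eq_mul, hcard] at haverage
  rw [haverage, hsplit, add_sub_cancel_left]

end Twirl

section SchmidtNumber

variable {d n : ℕ} {ρ τ : Matrix (Fin d × Fin d) (Fin d × Fin d) ℂ}

lemma schmidtNumberLE_sum_vecMulVec {ι : Type*} [Fintype ι] {w : ι → Fin d × Fin d → ℂ}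
    (hw : ∀ i, (toMat d (w i)).rank ≤ n) :
    SchmidtNumberLE d (∑ i, vecMulVec (w i) (star (w i))) n :=
  ⟨Fintype.card ι, w ∘ (Fintype.equivFin ι).symm, fun _ => hw _,
    ((Fintype.equivFin ι).symm.sum_comp fun i => vecMulVec (w i) (star (w i))).symm⟩

lemma SchmidtNumberLE.mono {m : ℕ} (hρ : SchmidtNumberLE d ρ m) (hmn : m ≤ n) :
    SchmidtNumberLE d ρ n := by
  obtain ⟨k, w, hw, rfl⟩ := hρ
  exact ⟨k, w, fun i => (hw i).trans hmn, rfl⟩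

lemma SchmidtNumberLE.add (hρ : SchmidtNumberLE d ρ n) (hτ : SchmidtNumberLE d τ n) :
    SchmidtNumberLE d (ρ + τ) n := by
  obtain ⟨k, w, hw, rfl⟩ := hρ
  obtain ⟨l, v, hv, rfl⟩ := hτ
  simpa using schmidtNumberLE_sum_vecMulVec (w := Sum.elim w v) (Sum.rec hw hv)

lemma SchmidtNumberLE.smul (hρ : SchmidtNumberLE d ρ n) {c : ℝ} (hc : 0 ≤ c) :
    SchmidtNumberLE d (c • ρ) n := by
  obtain ⟨k, w, hw, rfl⟩ := hρ
  refine ⟨k, fun i => √c • w i, fun i => ?_, ?_⟩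
  · have factor : toMat d (√c • w i) = (√c • (1 : Matrix (Fin d) (Fin d) ℂ)) * toMat d (w i) := by
      rw [Matrix.smul_mul, Matrix.one_mul]
      rfl
    rw [factor]
    exact (rank_mul_le_right _ _).trans (hw i)
  · simp only [star_smul, star_trivial, smul_vecMulVec, vecMulVec_smul, smul_smul,
      Real.mul_self_sqrt hc, Finset.smul_sum]

lemma rank_toMat_twirlVec_le (M : Matrix (Fin d) (Fin d) ℂ) (σ : Equiv.Perm (Fin d))
    (χ : Fin d → ZMod 3) : (toMat d (twirlVec M σ χ)).rank ≤ M.rank := by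
  have factor : toMat d (twirlVec M σ χ) = diagonal (fun i => ZMod.stdAddChar (χ i)) *
      M.submatrix σ σ * diagonal (fun j => ZMod.stdAddChar (-χ j)) := by
    ext i j
    rw [mul_diagonal, diagonal_mul, submatrix_apply, mul_right_comm, ← AddChar.map_add_eq_mul,
      ← sub_eq_add_neg]
    rfl
  rw [factor]
  exact (rank_mul_le_left _ _).trans
    ((rank_mul_le_right _ _).trans (rank_submatrix M σ σ).le)

lemma schmidtNumberLE_twirl (M : Matrix (Fin d) (Fin d) ℂ) :
    SchmidtNumberLE d (twirl M) M.rank :=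
  schmidtNumberLE_sum_vecMulVec fun x => rank_toMat_twirlVec_le M x.1 x.2

open scoped Matrix.Norms.Frobenius in
lemma frobenius_norm_toMat_sq (w : Fin d × Fin d → ℂ) :
    ((‖toMat d w‖ ^ 2 : ℝ) : ℂ) = w ⬝ᵥ star w := by
  rw [frobenius_norm_sq_eq_sum, dotProduct, Fintype.sum_prod_type]
  simp [toMat, Complex.mul_conj']

lemma star_psiPlus_dotProduct (w : Fin d × Fin d → ℂ) :
    star (psiPlus d) ⬝ᵥ w = ((√d)⁻¹ : ℝ) * (toMat d w).trace := by
  rw [dotProduct, Fintype.sum_prod_type, Matrix.trace, Finset.mul_sum]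
  simp [psiPlus, toMat, apply_ite, ite_mul]

open scoped Matrix.Norms.Frobenius in
lemma norm_star_psiPlus_dotProduct_sq_le (w : Fin d × Fin d → ℂ) :
    ‖star (psiPlus d) ⬝ᵥ w‖ ^ 2 ≤ (toMat d w).rank / d * ‖toMat d w‖ ^ 2 := by
  calc ‖star (psiPlus d) ⬝ᵥ w‖ ^ 2 = (d : ℝ)⁻¹ * ‖(toMat d w).trace‖ ^ 2 := by
        rw [star_psiPlus_dotProduct, norm_mul, mul_pow, Complex.norm_real, Real.norm_eq_abs,
          sq_abs, inv_pow, Real.sq_sqrt d.cast_nonneg]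
    _ ≤ (d : ℝ)⁻¹ * ((toMat d w).rank * ‖toMat d w‖ ^ 2) := by
        gcongr
        exact norm_trace_sq_le_rank_mul _
    _ = (toMat d w).rank / d * ‖toMat d w‖ ^ 2 := by ring

lemma star_dotProduct_vecMulVec_mulVec {ι : Type*} [Fintype ι] (u w : ι → ℂ) :
    star u ⬝ᵥ (vecMulVec w (star w) *ᵥ u) = ((‖star u ⬝ᵥ w‖ ^ 2 : ℝ) : ℂ) := by
  rw [vecMulVec_mulVec, dotProduct_smul, op_smul_eq_smul, smul_eq_mul, star_dotProduct w u,
    Complex.ofReal_pow]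
  exact Complex.conj_mul' _

lemma SchmidtNumberLE.fidelity_psiPlus_le (hρ : SchmidtNumberLE d ρ n) :
    (star (psiPlus d) ⬝ᵥ (ρ *ᵥ psiPlus d)).re ≤ n / d * ρ.trace.re := by
  obtain ⟨k, w, hw, rfl⟩ := hρ
  simp only [sum_mulVec, dotProduct_sum, trace_sum, trace_vecMulVec, Complex.re_sum,
    star_dotProduct_vecMulVec_mulVec, ← frobenius_norm_toMat_sq, Complex.ofReal_re, Finset.mul_sum]
  refine Finset.sum_le_sum fun i _ => (norm_star_psiPlus_dotProduct_sq_le (w i)).trans ?_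
  gcongr
  exact hw i

/-- The state `ρ_g = (𝟙 - Z)/(d² - d)`, uniform on the basis vectors `|ij⟩` with `i ≠ j`. -/
noncomputable def rhoG (d : ℕ) : Matrix (Fin d × Fin d) (Fin d × Fin d) ℂ :=
  ((d : ℝ) ^ 2 - d)⁻¹ • (1 - Zmat d)

/-- The state `(β ρ_g + P₊)/(1 + β)`. -/
noncomputable def rhoBeta (d : ℕ) (β : ℝ) : Matrix (Fin d × Fin d) (Fin d × Fin d) ℂ :=
  (1 + β)⁻¹ • (β • rhoG d + Pplus d)

lemma Pplus_apply (i j k l : Fin d) :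
    Pplus d (i, j) (k, l) = if i = j ∧ k = l then (d : ℂ)⁻¹ else 0 := by
  have hs := ofReal_inv_sqrt_mul_self d.cast_nonneg
  rw [Complex.ofReal_natCast] at hs
  by_cases hij : i = j <;> by_cases hkl : k = l <;>
    simp [Pplus, psiPlus, vecMulVec_apply, hij, hkl, ← hs]

lemma rhoG_apply (i j k l : Fin d) :
    rhoG d (i, j) (k, l) = if i ≠ j ∧ i = k ∧ j = l then ((d : ℂ) ^ 2 - d)⁻¹ else 0 := by
  rw [rhoG, Zmat, ← diagonal_one, diagonal_sub, Matrix.smul_apply, diagonal_apply]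
  by_cases hkl : i = k ∧ j = l
  · obtain ⟨rfl, rfl⟩ := hkl
    by_cases hij : i = j <;> simp [hij]
  · simp [hkl]

lemma sq_sub_self_ne_zero (hd : 2 ≤ d) : (d : ℝ) ^ 2 - d ≠ 0 := by
  have : (2 : ℝ) ≤ d := mod_cast hd
  nlinarith

open scoped Matrix.Norms.Frobenius in
lemma twirl_eq_of_diag_eq {M : Matrix (Fin d) (Fin d) ℂ} {c : ℂ} (hc : ∀ i, M i i = c) :
    twirl M = ((3 ^ d * d.factorial : ℝ)) •
      ((‖M‖ ^ 2 - d * ‖c‖ ^ 2) • rhoG d + (d * ‖c‖ ^ 2) • Pplus d) := by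
  ext ⟨i, j⟩ ⟨k, l⟩
  simp only [twirl_apply, Matrix.smul_apply, Matrix.add_apply, rhoG_apply, Pplus_apply]
  by_cases hdiag : i = j ∧ k = l
  · obtain ⟨rfl, rfl⟩ := hdiag
    have hd : (d : ℂ) ≠ 0 := Nat.cast_ne_zero.mpr i.pos.ne'
    simp only [and_self, true_or, ↓reduceIte, Fintype.card_fin, hc, RCLike.star_def,
      Complex.mul_conj', Finset.sum_const, Finset.card_univ, Fintype.card_perm, nsmul_eq_mul,
      ne_eq, not_true_eq_false, false_and, smul_zero, Complex.real_smul, Complex.ofReal_mul,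
      Complex.ofReal_natCast, Complex.ofReal_pow, zero_add, Complex.ofReal_ofNat]
    field_simp
  by_cases hsame : i = k ∧ j = l
  · obtain ⟨rfl, rfl⟩ := hsame
    have hij : i ≠ j := fun h => hdiag ⟨h, h⟩
    have hd : 2 ≤ d := Fin.nontrivial_iff_two_le.mp ⟨i, j, hij⟩
    have hsum : ∑ σ : Equiv.Perm (Fin d), M (σ i) (σ j) * star (M (σ i) (σ j)) =
        ((d.factorial * (‖M‖ ^ 2 - d * ‖c‖ ^ 2) / ((d : ℝ) ^ 2 - d) : ℝ) : ℂ) := by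
      have haverage := sum_perm_norm_sq_of_diag_eq hc hij
      rw [Fintype.card_fin, mul_comm] at haverage
      rw [← eq_div_of_mul_eq (sq_sub_self_ne_zero hd) haverage]
      simp [Complex.mul_conj']
    rw [hsum]
    simp only [hij, and_self, or_true, ↓reduceIte, Fintype.card_fin, Complex.ofReal_div,
      Complex.ofReal_mul, Complex.ofReal_natCast, Complex.ofReal_sub, Complex.ofReal_pow, ne_eq,
      not_false_eq_true, Complex.real_smul, smul_zero, add_zero, Complex.ofReal_ofNat]
    ring
  · simp [hdiag, hsame]

open scoped Matrix.Norms.Frobenius in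
lemma schmidtNumberLE_of_diag_eq {M : Matrix (Fin d) (Fin d) ℂ} {c : ℂ} (hc : ∀ i, M i i = c) :
    SchmidtNumberLE d ((‖M‖ ^ 2 - d * ‖c‖ ^ 2) • rhoG d + (d * ‖c‖ ^ 2) • Pplus d) M.rank := by
  have hN : (0 : ℝ) < 3 ^ d * d.factorial := by positivity
  have h := (schmidtNumberLE_twirl M).smul (inv_nonneg.mpr hN.le)
  rwa [twirl_eq_of_diag_eq hc, inv_smul_smul₀ hN.ne'] at h

open scoped Matrix.Norms.Frobenius in
lemma schmidtNumberLE_rhoG_one (hd : 2 ≤ d) : SchmidtNumberLE d (rhoG d) 1 := by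
  have : Nontrivial (Fin d) := Fin.nontrivial_iff_two_le.mpr hd
  obtain ⟨a, b, hab⟩ := exists_pair_ne (Fin d)
  let M : Matrix (Fin d) (Fin d) ℂ := vecMulVec (Pi.single a 1) (Pi.single b 1)
  have hdiag (i : Fin d) : M i i = 0 := by
    simp only [M, vecMulVec_apply, Pi.single_apply]
    grind
  have hnorm : ‖M‖ ^ 2 = 1 := by
    simp [frobenius_norm_sq_eq_sum, M, vecMulVec_apply, Pi.single_apply, apply_ite, ite_pow]
  have h := (schmidtNumberLE_of_diag_eq hdiag).mono (rank_vecMulVec_le _ _)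
  simpa [hnorm] using h

lemma schmidtNumberLE_smul_rhoG_add_Pplus (hn : 1 ≤ n) (hnd : n ≤ d) :
    SchmidtNumberLE d ((((d : ℝ) - n) / n) • rhoG d + Pplus d) n := by
  have : NeZero d := ⟨by omega⟩
  have hd : (d : ℝ) ≠ 0 := NeZero.ne _
  have hn0 : (n : ℝ) ≠ 0 := by positivity
  obtain ⟨P, hP, hdiag⟩ := exists_isStarProjection_diag_eq (ι := Fin d) (r := n) (by simpa)
  rw [Fintype.card_fin] at hdiag
  have hrank : P.rank = n := by
    have htrace := trace_eq_rank_of_isIdempotentElem hP.isIdempotentElem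
    simp only [Matrix.trace, diag_apply, hdiag] at htrace
    rw [Finset.sum_const, Finset.card_univ, Fintype.card_fin, nsmul_eq_mul,
      ← Complex.ofReal_natCast, ← Complex.ofReal_mul, mul_div_cancel₀ _ hd] at htrace
    exact_mod_cast htrace.symm
  have h := (schmidtNumberLE_of_diag_eq hdiag).smul (c := d / n ^ 2) (by positivity)
  rw [frobenius_norm_sq_eq_rank_of_isStarProjection hP, hrank, smul_add, smul_smul, smul_smul,
    Complex.norm_real, Real.norm_eq_abs, sq_abs] at h
  convert h using 2
  · congr 1
    field_simp
  · rw [show (d / n ^ 2 * (d * (n / d) ^ 2) : ℝ) = 1 by field_simp, one_smul]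

lemma star_psiPlus_dotProduct_psiPlus (hd : d ≠ 0) : star (psiPlus d) ⬝ᵥ psiPlus d = 1 := by
  have htoMat : toMat d (psiPlus d) = (((√d)⁻¹ : ℝ) : ℂ) • 1 := by
    ext i j
    simp [toMat, psiPlus, one_apply]
  rw [star_psiPlus_dotProduct, htoMat, trace_smul, trace_one, Fintype.card_fin, smul_eq_mul,
    ← mul_assoc, ofReal_inv_sqrt_mul_self d.cast_nonneg, Complex.ofReal_natCast,
    inv_mul_cancel₀ (Nat.cast_ne_zero.mpr hd)]

lemma rhoG_mulVec_psiPlus : rhoG d *ᵥ psiPlus d = 0 := by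
  ext p
  by_cases hp : p.1 = p.2 <;>
    simp [rhoG, smul_mulVec, sub_mulVec, Zmat, mulVec_diagonal, psiPlus, hp]

lemma trace_rhoG (hd : 2 ≤ d) : (rhoG d).trace = 1 := by
  have htrace : (1 - Zmat d).trace = ((d ^ 2 - d : ℝ) : ℂ) := by
    rw [trace_sub, trace_one, Zmat, trace_diagonal, Fintype.sum_prod_type]
    simp [sq]
  rw [rhoG, trace_smul, htrace, Complex.real_smul, ← Complex.ofReal_mul,
    inv_mul_cancel₀ (sq_sub_self_ne_zero hd), Complex.ofReal_one]

lemma trace_Pplus (hd : d ≠ 0) : (Pplus d).trace = 1 := by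
  rw [Pplus, trace_vecMulVec, dotProduct_comm, star_psiPlus_dotProduct_psiPlus hd]

lemma trace_rhoBeta (hd : 2 ≤ d) {β : ℝ} (hβ : 1 + β ≠ 0) : (rhoBeta d β).trace = 1 := by
  rw [rhoBeta, trace_smul, trace_add, trace_smul, trace_rhoG hd, trace_Pplus (by omega)]
  rw [Complex.real_smul, Complex.real_smul, mul_one]
  rw [add_comm (β : ℂ)]
  exact_mod_cast inv_mul_cancel₀ hβ

lemma fidelity_psiPlus_rhoBeta (hd : d ≠ 0) (β : ℝ) :
    star (psiPlus d) ⬝ᵥ (rhoBeta d β *ᵥ psiPlus d) = ((1 + β)⁻¹ : ℝ) := by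
  have hψ := star_psiPlus_dotProduct_psiPlus hd
  simp [rhoBeta, smul_mulVec, add_mulVec, rhoG_mulVec_psiPlus, Pplus, vecMulVec_mulVec, hψ]

theorem schmidtNumberLE_rhoBeta_iff (hd : 2 ≤ d) (hn : 1 ≤ n) (hnd : n ≤ d) {β : ℝ} (hβ : -1 < β) :
    SchmidtNumberLE d (rhoBeta d β) n ↔ ((d : ℝ) - n) / n ≤ β := by
  have hβ' : 0 < 1 + β := by linarith
  have hn0 : (0 : ℝ) < n := by positivity
  have hd0 : (0 : ℝ) < d := by positivity
  constructor
  · intro h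
    have hfidelity := h.fidelity_psiPlus_le
    rw [fidelity_psiPlus_rhoBeta (by omega), trace_rhoBeta hd hβ'.ne', Complex.ofReal_re,
      Complex.one_re, mul_one, inv_le_iff_one_le_mul₀ hβ', div_mul_eq_mul_div,
      one_le_div hd0] at hfidelity
    rw [div_le_iff₀ hn0]
    linarith
  · intro h
    have hsum := (((schmidtNumberLE_rhoG_one hd).mono hn).smul (sub_nonneg.mpr h)).add
      (schmidtNumberLE_smul_rhoG_add_Pplus hn hnd)
    rw [← add_assoc, ← add_smul, sub_add_cancel] at hsum
    exact hsum.smul (inv_nonneg.mpr hβ'.le)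

end SchmidtNumber

/-- The states `(β ρ_g + P₊)/(1+β)` with `ρ_g = (𝟙-Z)/(d²-d)` have Schmidt number
exactly `n` for `(d-n)/n ≤ β < (d-n+1)/(n-1)`. -/
theorem schmidt_number_interval (d n : ℕ) (hd : 2 ≤ d) (hn : 2 ≤ n) (hnd : n ≤ d)
    (β : ℝ) (hβ1 : ((d : ℝ) - n) / n ≤ β) (hβ2 : β < ((d : ℝ) - n + 1) / ((n : ℝ) - 1)) :
    SchmidtNumberLE d ((1 + β)⁻¹ •
      (β • (((d : ℝ) ^ 2 - d)⁻¹ •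
          ((1 : Matrix (Fin d × Fin d) (Fin d × Fin d) ℂ) - Zmat d)) + Pplus d)) n ∧
    ¬ SchmidtNumberLE d ((1 + β)⁻¹ •
      (β • (((d : ℝ) ^ 2 - d)⁻¹ •
          ((1 : Matrix (Fin d × Fin d) (Fin d × Fin d) ℂ) - Zmat d)) + Pplus d)) (n - 1) := by
  change SchmidtNumberLE d (rhoBeta d β) n ∧ ¬ SchmidtNumberLE d (rhoBeta d β) (n - 1)
  have hβ : -1 < β := by
    have : 0 ≤ ((d : ℝ) - n) / n := div_nonneg (sub_nonneg.mpr (mod_cast hnd)) n.cast_nonneg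
    linarith
  rw [schmidtNumberLE_rhoBeta_iff hd (by omega) hnd hβ,
    schmidtNumberLE_rhoBeta_iff hd (by omega) (by omega) hβ, Nat.cast_sub (by omega), Nat.cast_one,
    ← sub_add, not_le]
  exact ⟨hβ1, hβ2⟩
end

section
/- Weak upper bound on the random Schmidt robustness: let d ≥ 2, 1 ≤ n < d, and let ψ = Σ_i a_i |ii⟩ be a unit vector with a_i ≥ 0 and Σ_i a_i² = 1. Then the matrix ψψ† + ((d−n)/(nd−1)) · 𝟙 on ℂ^d ⊗ ℂ^d has Schmidt number at most n. -/
/-!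
Let `Ω = ∑ᵢ |ii⟩`, so that a vector `v` is `(M_v ⊗ 1) Ω`. When `M_v` is a contraction, conjugating
`ΩΩ† + c 𝟙` by `M_v ⊗ 1` and adding back the separable matrix `c (1 - M_v M_v†) ⊗ 1` gives
`vv† + c 𝟙`, and neither step raises the Schmidt number. This reduces everything to `v = Ω`.

Let `V` be the sum of `N ≥ n` product vectors `vᵢ`. The matrix `(n - 1) VV† + (N - n) ∑ᵢ vᵢvᵢ†`
has Schmidt number at most `n`: for `N = n` it is a multiple of `VV†`, and the case `N` is an
average of cases `N - 1` with one vector left out. Both the vectors `|ii⟩` and the vectors `χ ⊗ χ̄`,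
for `χ` a character of `ℤ/d`, sum to a multiple of `Ω`. Averaging the second family over the
diagonal unitaries `D ⊗ D̄` turns each `(χ ⊗ χ̄)(χ ⊗ χ̄)†` into `ΩΩ† + 𝟙 - ∑ᵢ |ii⟩⟨ii|`. Adding the
two results, the second one divided by `d`, makes the diagonal terms cancel and leaves
`(nd - 1) ΩΩ† + (d - n) 𝟙`.
-/

open Matrix BigOperators Kronecker ComplexOrder

/-- The vector `Σ_i a_i |ii⟩`. -/
noncomputable def ketDiag (d : ℕ) (a : Fin d → ℝ) : Fin d × Fin d → ℂ :=
  fun p => if p.1 = p.2 then ((a p.1 : ℝ) : ℂ) else 0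

section

open Finset

section Rank

variable {ι m n R : Type*} [Fintype n] [CommRing R] [Nontrivial R]

theorem rank_sum_vecMulVec_le_card (s : Finset ι) (x : ι → m → R) (y : ι → n → R) :
    (∑ i ∈ s, vecMulVec (x i) (y i)).rank ≤ #s := by
  have factorization : ∑ i ∈ s, vecMulVec (x i) (y i) =
      (of fun a (i : s) => x i a) * of fun (i : s) b => y i b := by
    ext a b
    simp only [Matrix.sum_apply, vecMulVec_apply, mul_apply, of_apply]
    exact (sum_coe_sort s fun i => x i a * y i b).symm
  rw [factorization]
  exact (rank_mul_le_left _ _).trans ((rank_le_card_width _).trans_eq (Fintype.card_coe s))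

end Rank

variable {d n : ℕ}

/-- The unnormalised pure state `v vᴴ` on ℂ^d ⊗ ℂ^d whose vector `v` has `M_v = M`. The transpose
is there because `Matrix.vec` stacks columns, whereas `M_v` is read off row by row. -/
noncomputable def pureState (M : Matrix (Fin d) (Fin d) ℂ) :
    Matrix (Fin d × Fin d) (Fin d × Fin d) ℂ :=
  vecMulVec (vec Mᵀ) (star (vec Mᵀ))

theorem pureState_apply (M : Matrix (Fin d) (Fin d) ℂ) (p q : Fin d × Fin d) :
    pureState M p q = M p.1 p.2 * star (M q.1 q.2) :=
  rfl

theorem pureState_toMat (v : Fin d × Fin d → ℂ) :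
    pureState (toMat d v) = vecMulVec v (star v) :=
  rfl

theorem pureState_smul (c : ℝ) (M : Matrix (Fin d) (Fin d) ℂ) :
    pureState (c • M) = c ^ 2 • pureState M := by
  ext p q
  simp [pureState_apply]
  ring

theorem pureState_one_apply (p q : Fin d × Fin d) :
    pureState 1 p q = if p.1 = p.2 ∧ q.1 = q.2 then 1 else 0 := by
  simp only [pureState_apply, one_apply, apply_ite star, star_one, star_zero]
  grind

theorem sum_pureState_single_apply (p q : Fin d × Fin d) :
    (∑ i, pureState (single i i 1)) p q = if p = q ∧ p.1 = p.2 then 1 else 0 := by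
  calc
    (∑ i, pureState (single i i 1)) p q
      = ∑ i, if i = p.1 then (if p = q ∧ p.1 = p.2 then 1 else 0) else 0 := by
      rw [Matrix.sum_apply]
      refine sum_congr rfl fun i _ => ?_
      simp only [pureState_apply, single_apply, apply_ite star, star_one, star_zero]
      grind
    _ = if p = q ∧ p.1 = p.2 then 1 else 0 := by simp

theorem vecMulVec_star_kronecker_vecMulVec_star (u v : Fin d → ℂ) :
    vecMulVec u (star u) ⊗ₖ vecMulVec v (star v) = pureState (vecMulVec u v) := by
  ext p q
  simp only [kroneckerMap_apply, vecMulVec_apply, Pi.star_apply, pureState_apply, star_mul']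
  ring

theorem kronecker_mul_pureState_mul_conjTranspose (A B M : Matrix (Fin d) (Fin d) ℂ) :
    (A ⊗ₖ B) * pureState M * (A ⊗ₖ B)ᴴ = pureState (A * M * Bᵀ) := by
  rw [pureState, mul_vecMulVec, vecMulVec_mul, ← star_mulVec, kronecker_mulVec_vec, pureState,
    transpose_mul, transpose_mul, transpose_transpose, Matrix.mul_assoc]

theorem sum_pureState_sum_erase_add {ι : Type*} [DecidableEq ι] (s : Finset ι)
    (M : ι → Matrix (Fin d) (Fin d) ℂ) (a b : ℝ) :
    ∑ i ∈ s, (a • pureState (∑ j ∈ s.erase i, M j) + b • ∑ j ∈ s.erase i, pureState (M j)) =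
      ((#s - 2) * a) • pureState (∑ i ∈ s, M i) +
        (a + (#s - 1) * b) • ∑ i ∈ s, pureState (M i) := by
  rw [sum_congr rfl fun i hi => by
    rw [sum_erase_eq_sub (f := M) hi, sum_erase_eq_sub (f := fun j => pureState (M j)) hi]]
  ext p q
  simp only [Matrix.add_apply, Matrix.smul_apply, Matrix.sub_apply, Matrix.sum_apply,
    pureState_apply, star_sub, star_sum, sub_mul, mul_sub, sum_add_distrib, sum_sub_distrib,
    ← mul_sum, ← sum_mul, sum_const, nsmul_eq_mul, Complex.real_smul]
  push_cast
  ring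

namespace SchmidtNumberLE

variable {ρ τ : Matrix (Fin d × Fin d) (Fin d × Fin d) ℂ}

theorem of_pureState {M : Matrix (Fin d) (Fin d) ℂ} (hM : M.rank ≤ n) :
    SchmidtNumberLE d (pureState M) n :=
  ⟨1, fun _ => vec Mᵀ, fun _ => hM, by simp [pureState]⟩

theorem zero : SchmidtNumberLE d 0 n :=
  ⟨0, Fin.elim0, fun i => i.elim0, by simp⟩

theorem add_s13 (hρ : SchmidtNumberLE d ρ n) (hτ : SchmidtNumberLE d τ n) :
    SchmidtNumberLE d (ρ + τ) n := by
  obtain ⟨k, v, hv, rfl⟩ := hρ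
  obtain ⟨l, w, hw, rfl⟩ := hτ
  refine ⟨k + l, Fin.append v w, fun i => ?_, by simp [Fin.sum_univ_add]⟩
  cases i using Fin.addCases with
  | left i => simpa using hv i
  | right i => simpa using hw i

theorem sum {ι : Type*} {s : Finset ι} {ρ : ι → Matrix (Fin d × Fin d) (Fin d × Fin d) ℂ}
    (hρ : ∀ i ∈ s, SchmidtNumberLE d (ρ i) n) : SchmidtNumberLE d (∑ i ∈ s, ρ i) n :=
  sum_induction ρ (SchmidtNumberLE d · n) (fun _ _ => add_s13) zero hρ

theorem smul_s13 {c : ℝ} (hc : 0 ≤ c) (hρ : SchmidtNumberLE d ρ n) : SchmidtNumberLE d (c • ρ) n := by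
  obtain ⟨k, v, hv, rfl⟩ := hρ
  rw [smul_sum]
  refine sum fun i _ => ?_
  rw [← pureState_toMat, ← Real.sq_sqrt hc, ← pureState_smul, ← smul_one_mul]
  exact of_pureState ((rank_mul_le_right _ _).trans (hv i))

theorem kronecker_conj (hρ : SchmidtNumberLE d ρ n) (A B : Matrix (Fin d) (Fin d) ℂ) :
    SchmidtNumberLE d ((A ⊗ₖ B) * ρ * (A ⊗ₖ B)ᴴ) n := by
  obtain ⟨k, v, hv, rfl⟩ := hρ
  rw [Matrix.mul_sum, Matrix.sum_mul]
  refine sum fun i _ => ?_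
  rw [← pureState_toMat, kronecker_mul_pureState_mul_conjTranspose]
  exact of_pureState ((rank_mul_le_left _ _).trans ((rank_mul_le_right _ _).trans (hv i)))

theorem kronecker_of_posSemidef (hn : 1 ≤ n) {P Q : Matrix (Fin d) (Fin d) ℂ}
    (hP : P.PosSemidef) (hQ : Q.PosSemidef) : SchmidtNumberLE d (P ⊗ₖ Q) n := by
  obtain ⟨k, u, rfl⟩ := posSemidef_iff_eq_sum_vecMulVec.mp hP
  obtain ⟨l, v, rfl⟩ := posSemidef_iff_eq_sum_vecMulVec.mp hQ
  have separable : (∑ i, vecMulVec (u i) (star (u i))) ⊗ₖ (∑ j, vecMulVec (v j) (star (v j))) =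
      ∑ i, ∑ j, pureState (vecMulVec (u i) (v j)) := by
    simp only [← vecMulVec_star_kronecker_vecMulVec_star]
    ext p q
    simp only [kroneckerMap_apply, Matrix.sum_apply, sum_mul_sum]
  rw [separable]
  exact sum fun i _ => sum fun j _ => of_pureState ((rank_vecMulVec_le _ _).trans hn)

theorem pureState_add_smul_one_of_contraction (hn : 1 ≤ n) {c : ℝ} (hc : 0 ≤ c)
    {M : Matrix (Fin d) (Fin d) ℂ} (hM : (1 - M * Mᴴ).PosSemidef)
    (h : SchmidtNumberLE d (pureState 1 + c • 1) n) :
    SchmidtNumberLE d (pureState M + c • 1) n := by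
  have restored : (M ⊗ₖ 1) * 1 * (M ⊗ₖ 1)ᴴ +
      (1 - M * Mᴴ) ⊗ₖ (1 : Matrix (Fin d) (Fin d) ℂ) = 1 := by
    rw [Matrix.mul_one (M ⊗ₖ 1), conjTranspose_kronecker, conjTranspose_one, ← mul_kronecker_mul,
      Matrix.mul_one, ← add_kronecker, add_sub_cancel, one_kronecker_one]
  convert (h.kronecker_conj M 1).add_s13 ((kronecker_of_posSemidef hn hM .one).smul_s13 hc) using 1
  rw [Matrix.mul_add, Matrix.add_mul, kronecker_mul_pureState_mul_conjTranspose, transpose_one,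
    Matrix.mul_one, Matrix.mul_one, Matrix.mul_smul, Matrix.smul_mul, add_assoc, ← smul_add,
    restored]

/-- Induction on `#s`: averaging the case `#s - 1` over the omitted vector. -/
theorem pureState_sum_add_sum_pureState {ι : Type*} (hn : 1 ≤ n) (x y : ι → Fin d → ℂ)
    (s : Finset ι) (hs : n ≤ #s) :
    SchmidtNumberLE d (((n : ℝ) - 1) • pureState (∑ i ∈ s, vecMulVec (x i) (y i)) +
      ((#s : ℝ) - n) • ∑ i ∈ s, pureState (vecMulVec (x i) (y i))) n := by
  classical
  obtain rfl | hn' := hn.eq_or_lt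
  · have products : SchmidtNumberLE d (∑ i ∈ s, pureState (vecMulVec (x i) (y i))) 1 :=
      sum fun i _ => of_pureState (rank_vecMulVec_le _ _)
    simpa using products.smul_s13 (sub_nonneg.mpr (Nat.one_le_cast.mpr hs) : (0 : ℝ) ≤ #s - 1)
  obtain ⟨N, card_eq⟩ : ∃ N, #s = N := ⟨_, rfl⟩
  rw [card_eq] at hs ⊢
  induction N, hs using Nat.le_induction generalizing s with
  | base =>
    have superposition := of_pureState ((rank_sum_vecMulVec_le_card s x y).trans_eq card_eq)
    simpa using superposition.smul_s13 (sub_nonneg.mpr (Nat.one_le_cast.mpr hn) : (0 : ℝ) ≤ n - 1)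
  | succ N hnN ih =>
    have hN : (0 : ℝ) < N - 1 := sub_pos.mpr (Nat.one_lt_cast.mpr (hn'.trans_le hnN))
    have leave_one_out := (sum fun i hi => ih (s.erase i)
      (by rw [card_erase_of_mem hi, card_eq, Nat.add_sub_cancel])).smul_s13 (inv_nonneg.mpr hN.le)
    convert leave_one_out using 1
    rw [sum_pureState_sum_erase_add, smul_add, smul_smul, smul_smul, card_eq]
    congr 2 <;> push_cast <;> field_simp <;> ring

end SchmidtNumberLE

section PhaseTwirl

variable {ι : Type*} [Fintype ι] [DecidableEq ι]

/-- The phases are taken modulo 3 because signs would also let through `i = l ∧ j = k`. -/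
theorem sum_addChar_single_mul (i j k l : ι) :
    ∑ ψ : AddChar (ι → ZMod 3) ℂ, ψ (Pi.single i 1) * star (ψ (Pi.single j 1)) *
        star (ψ (Pi.single k 1) * star (ψ (Pi.single l 1))) =
      if i = k ∧ j = l ∨ i = j ∧ k = l then 3 ^ Fintype.card ι else 0 := by
  let e (m : ι) : ι → ZMod 3 := Pi.single m 1
  have balanced : e i - e j - (e k - e l) = 0 ↔ i = k ∧ j = l ∨ i = j ∧ k = l := by
    have one_ne : (1 : ZMod 3) ≠ 0 := by decide
    have one_add_one_ne : (1 + 1 : ZMod 3) ≠ 0 := by decide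
    have := Pi.single_add_single_eq_single_add_single (k := i) (l := l) (m := j) (n := k)
      one_ne one_ne
    grind
  calc
    _ = ∑ ψ : AddChar (ι → ZMod 3) ℂ, ψ (e i - e j - (e k - e l)) :=
      sum_congr rfl fun ψ _ => by
        simp [sub_eq_add_neg, AddChar.map_add_eq_mul, AddChar.map_neg_eq_conj, e, mul_comm]
    _ = _ := by simp [AddChar.sum_apply_eq_ite, balanced]

end PhaseTwirl

/-- The average of `ρ` over all local unitaries `D ⊗ D̄` with `D` diagonal, as a real-linear map.
Of the entries `⟨ij|ρ|kl⟩` it keeps exactly those on which the phases cancel. -/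
def phaseTwirl : Matrix (Fin d × Fin d) (Fin d × Fin d) ℂ →ₗ[ℝ]
    Matrix (Fin d × Fin d) (Fin d × Fin d) ℂ where
  toFun ρ := of fun p q =>
    if p.1 = q.1 ∧ p.2 = q.2 ∨ p.1 = p.2 ∧ q.1 = q.2 then ρ p q else 0
  map_add' ρ τ := by ext; simp [ite_add_ite]
  map_smul' c ρ := by ext; simp

theorem phaseTwirl_apply (ρ : Matrix (Fin d × Fin d) (Fin d × Fin d) ℂ) (p q : Fin d × Fin d) :
    phaseTwirl ρ p q = if p.1 = q.1 ∧ p.2 = q.2 ∨ p.1 = p.2 ∧ q.1 = q.2 then ρ p q else 0 :=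
  rfl

theorem schmidtNumberLE_phaseTwirl {ρ : Matrix (Fin d × Fin d) (Fin d × Fin d) ℂ}
    (hρ : SchmidtNumberLE d ρ n) : SchmidtNumberLE d (phaseTwirl ρ) n := by
  let D (ψ : AddChar (Fin d → ZMod 3) ℂ) : Matrix (Fin d) (Fin d) ℂ :=
    diagonal fun i => ψ (Pi.single i 1)
  have average : phaseTwirl ρ =
      ((3 : ℝ) ^ d)⁻¹ • ∑ ψ, (D ψ ⊗ₖ (D ψ)ᴴ) * ρ * (D ψ ⊗ₖ (D ψ)ᴴ)ᴴ := by
    ext ⟨i, j⟩ ⟨k, l⟩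
    have phases := sum_addChar_single_mul i j k l
    rw [Fintype.card_fin] at phases
    simp only [D, Matrix.smul_apply, Matrix.sum_apply, diagonal_conjTranspose,
      diagonal_kronecker_diagonal, mul_diagonal, diagonal_mul, Pi.star_apply,
      mul_right_comm _ (ρ _ _), ← sum_mul, phases]
    simp [phaseTwirl_apply]
  rw [average]
  exact (SchmidtNumberLE.sum fun ψ _ => hρ.kronecker_conj (D ψ) (D ψ)ᴴ).smul_s13 (by positivity)

theorem phaseTwirl_pureState_one : phaseTwirl (pureState 1) = pureState (d := d) 1 := by
  ext p q
  simp only [phaseTwirl_apply, pureState_one_apply]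
  grind

theorem phaseTwirl_pureState_addChar [NeZero d] (χ : AddChar (Fin d) ℂ) :
    phaseTwirl (pureState (vecMulVec χ (star χ))) =
      pureState 1 + 1 - ∑ i, pureState (single i i 1) := by
  have unimodular (i : Fin d) : χ i * star (χ i) = 1 := by simp [Complex.mul_conj']
  ext ⟨i, j⟩ ⟨k, l⟩
  simp only [phaseTwirl_apply, Matrix.sub_apply, Matrix.add_apply, pureState_one_apply,
    sum_pureState_single_apply, one_apply, pureState_apply (vecMulVec χ (star χ)),
    vecMulVec_apply, Pi.star_apply, star_mul', star_star]
  grind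

theorem sum_vecMulVec_addChar {G : Type*} [AddCommGroup G] [Fintype G] [DecidableEq G] :
    ∑ χ : AddChar G ℂ, vecMulVec χ (star χ) = (Fintype.card G : ℝ) • 1 := by
  ext g h
  calc
    _ = ∑ χ : AddChar G ℂ, χ (g - h) := by
      simp [Matrix.sum_apply, vecMulVec_apply, sub_eq_add_neg, AddChar.map_add_eq_mul,
        AddChar.map_neg_eq_conj]
    _ = _ := by simp [AddChar.sum_apply_eq_ite, sub_eq_zero, one_apply]

/-- The standard basis leaves noise on the span of the `|ii⟩` only. The vectors `χ ⊗ χ̄` have all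
entries of modulus one, so their phase twirl supplies the noise off that span. -/
theorem schmidtNumberLE_isotropic (hn : 1 ≤ n) (hnd : n ≤ d) :
    SchmidtNumberLE d (((n : ℝ) * d - 1) • pureState 1 + ((d : ℝ) - n) • 1) n := by
  have : NeZero d := ⟨by lia⟩
  have hd : (d : ℝ) ≠ 0 := NeZero.ne _
  have standard := SchmidtNumberLE.pureState_sum_add_sum_pureState hn
    (fun i : Fin d => Pi.single i 1) (fun i => Pi.single i 1) univ (by simpa)
  have fourier := schmidtNumberLE_phaseTwirl <|
    SchmidtNumberLE.pureState_sum_add_sum_pureState hn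
      (fun χ : AddChar (Fin d) ℂ => χ) (fun χ => star χ) univ (by simpa)
  simp only [← single_eq_single_vecMulVec_single, sum_single_one, card_univ,
    Fintype.card_fin] at standard
  simp only [sum_vecMulVec_addChar, map_add, map_smul, map_sum, pureState_smul,
    phaseTwirl_pureState_one, phaseTwirl_pureState_addChar, sum_const, card_univ,
    AddChar.card_eq, Fintype.card_fin, ← Nat.cast_smul_eq_nsmul ℝ] at fourier
  convert standard.add_s13 (fourier.smul_s13 (inv_nonneg.mpr d.cast_nonneg : (0 : ℝ) ≤ (d : ℝ)⁻¹)) using 1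
  match_scalars <;> field_simp <;> ring

theorem toMat_ketDiag (a : Fin d → ℝ) : toMat d (ketDiag d a) = diagonal fun i => (a i : ℂ) := by
  ext i j
  simp [toMat, ketDiag, diagonal_apply]

theorem posSemidef_one_sub_toMat_ketDiag {a : Fin d → ℝ} (ha : ∀ i, a i ^ 2 ≤ 1) :
    (1 - toMat d (ketDiag d a) * (toMat d (ketDiag d a))ᴴ).PosSemidef := by
  rw [toMat_ketDiag, diagonal_conjTranspose, diagonal_mul_diagonal, ← diagonal_one, diagonal_sub,
    posSemidef_diagonal_iff]
  intro i
  simpa [← Complex.ofReal_mul, ← sq, sub_nonneg] using mod_cast ha i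

theorem weak_upper_bound_random_schmidt_robustness_general (hn : 1 ≤ n) (hnd : n < d)
    (v : Fin d × Fin d → ℂ) (hv : (1 - toMat d v * (toMat d v)ᴴ).PosSemidef) :
    SchmidtNumberLE d
      (vecMulVec v (star v) +
        (((d : ℝ) - n) / ((n : ℝ) * d - 1)) •
          (1 : Matrix (Fin d × Fin d) (Fin d × Fin d) ℂ)) n := by
  have hdn : (0 : ℝ) < d - n := sub_pos.mpr (Nat.cast_lt.mpr hnd)
  have hnd1 : (0 : ℝ) < n * d - 1 := sub_pos.mpr (mod_cast (by nlinarith : 1 < n * d))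
  refine SchmidtNumberLE.pureState_add_smul_one_of_contraction hn (div_pos hdn hnd1).le hv ?_
  convert (schmidtNumberLE_isotropic hn hnd.le).smul_s13 (inv_nonneg.mpr hnd1.le) using 1
  rw [smul_add, smul_smul, smul_smul, inv_mul_cancel₀ hnd1.ne', one_smul, ← div_eq_inv_mul]

end

/-- Weak upper bound on the random Schmidt robustness:
`ψψᴴ + ((d-n)/(nd-1)) 𝟙` has Schmidt number at most `n`. -/
theorem weak_upper_bound_random_schmidt_robustness (d n : ℕ) (hd : 2 ≤ d) (hn : 1 ≤ n)
    (hnd : n < d) (a : Fin d → ℝ) (ha : ∀ i, 0 ≤ a i) (hnorm : ∑ i, a i ^ 2 = 1) :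
    SchmidtNumberLE d
      (Matrix.vecMulVec (ketDiag d a) (star (ketDiag d a)) +
        (((d : ℝ) - n) / ((n : ℝ) * d - 1)) •
          (1 : Matrix (Fin d × Fin d) (Fin d × Fin d) ℂ)) n := by
  exact weak_upper_bound_random_schmidt_robustness_general hn hnd _ <|
    posSemidef_one_sub_toMat_ketDiag fun i =>
      (Finset.single_le_sum (fun j _ => sq_nonneg (a j)) (Finset.mem_univ i)).trans_eq hnorm
end
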